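/- Fix x ∈ ℝ. Then: (i) sup_{y ∈ ℝ} |∫_x^y K_Ai(u,x) du| < ∞; (ii) there is C > 0 such that |K_Ai(x,y)| ≤ C·|y|^{−3/4} for all y with |y| ≥ |x| + 1; (iii) there is C > 0 such that the derivative of y ↦ K_Ai(x,y) satisfies |∂_y K_Ai(x,y)| ≤ C·|y|^{−1/4} for all y with |y| ≥ |x| + 1. -/

import Mathlib

open MeasureTheory Filter Set

noncomputable section

/-- The Airy function `Ai(x) = (1/π)·lim_{b→∞} ∫_0^b cos(t³/3 + x·t) dt`. -/
def Ai (x : ℝ) : ℝ :=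
  (1 / Real.pi) *
    limUnder Filter.atTop (fun b : ℝ => ∫ t in (0:ℝ)..b, Real.cos (t ^ 3 / 3 + x * t))

/-- The Airy kernel. -/
def KAi (x y : ℝ) : ℝ :=
  if x = y then (deriv Ai x) ^ 2 - x * (Ai x) ^ 2
  else (Ai x * deriv Ai y - deriv Ai x * Ai y) / (x - y)

/-- One-point correlation function of the Airy₂ random point field. -/
def rho (x : ℝ) : ℝ := (deriv Ai x) ^ 2 - x * (Ai x) ^ 2

/-- Probabilists' Hermite polynomial `Ĥ_m(x) = (−1)^m e^{x²/2} (d/dx)^m e^{−x²/2}`. -/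
def hermiteP (m : ℕ) (x : ℝ) : ℝ :=
  (-1 : ℝ) ^ m * Real.exp (x ^ 2 / 2) * iteratedDeriv m (fun t => Real.exp (-t ^ 2 / 2)) x

/-- Normalized oscillator function `φ_m`. -/
def osc (m : ℕ) (x : ℝ) : ℝ :=
  (2 * Real.pi) ^ (-(1:ℝ)/4) * ((m.factorial : ℝ)) ^ (-(1:ℝ)/2) *
    Real.exp (-x ^ 2 / 4) * hermiteP m x

/-- `ψ_mⁿ(x) = n^{1/12}·φ_m(2√n + n^{−1/6}·x)`. -/
def psiUp (n m : ℕ) (x : ℝ) : ℝ :=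
  (n : ℝ) ^ ((1:ℝ)/12) * osc m (2 * Real.sqrt n + (n : ℝ) ^ (-(1:ℝ)/6) * x)

/-- `ψ_n = ψ_nⁿ`. -/
def psiN (n : ℕ) : ℝ → ℝ := psiUp n n

/-- The finite-`n` Airy kernel. -/
def KAiN (n : ℕ) (x y : ℝ) : ℝ :=
  if x = y then
    (deriv (psiN n) x) ^ 2 - psiN n x * deriv (deriv (psiN n)) x
      - (1 / (2 * (n : ℝ) ^ ((1:ℝ)/3))) * (psiN n x) ^ 2
  else
    (psiN n x * deriv (psiN n) y - deriv (psiN n) x * psiN n y) / (x - y)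
      - (1 / (2 * (n : ℝ) ^ ((1:ℝ)/3))) * (psiN n x * psiN n y)

/-- `(εf)(x) = (1/2)·∫_ℝ sign(x − y)·f(y) dy`. -/
def epsF (f : ℝ → ℝ) (x : ℝ) : ℝ := (1/2) * ∫ y : ℝ, Real.sign (x - y) * f y

/-- `εψ_n`. -/
def epsPsi (n : ℕ) : ℝ → ℝ := epsF (psiN n)

/-- `J₁(x,y) = K_Ai(x,y) + (1/2)·Ai(x)·(1 − ∫_y^∞ Ai(u) du)`. -/
def J1 (x y : ℝ) : ℝ := KAi x y + (1/2) * Ai x * (1 - ∫ u in Set.Ioi y, Ai u)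

/-- Scalar part of the quaternion product of Airy₁ kernels. -/
def L1 (x y : ℝ) : ℝ :=
  J1 x y * J1 y x -
    deriv (fun v => J1 x v) y * ((∫ u in x..y, J1 u x) - (1/2) * Real.sign (y - x))

/-- `J₁ⁿ(x,y) = K_Aiⁿ(x,y) + (1/2)·ψ_{n−1}ⁿ(x)·(εψ_n)(y)`. -/
def J1N (n : ℕ) (x y : ℝ) : ℝ :=
  KAiN n x y + (1/2) * psiUp n (n - 1) x * epsPsi n y

/-- Scalar part of the quaternion product of finite-`n` Airy₁ kernels. -/
def L1N (n : ℕ) (x y : ℝ) : ℝ :=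
  J1N n x y * J1N n y x -
    deriv (fun v => J1N n x v) y * ((∫ u in x..y, J1N n u x) - (1/2) * Real.sign (y - x))

/-- `ρ̂(x) = (1/π)·√(−x)` for `x < 0`, and `0` otherwise. -/
def rhoHat (x : ℝ) : ℝ := if x < 0 then Real.sqrt (-x) / Real.pi else 0

/-- `ρ̂ⁿ(x) = (1/π)·√(−x·(1 + x/(4·n^{2/3})))` on `(−4n^{2/3}, 0)`, and `0` otherwise. -/
def rhoHatN (n : ℕ) (x : ℝ) : ℝ :=
  if -(4 * (n : ℝ) ^ ((2:ℝ)/3)) < x ∧ x < 0 then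
    Real.sqrt (-x * (1 + x / (4 * (n : ℝ) ^ ((2:ℝ)/3)))) / Real.pi
  else 0

/-- `G_{a,b,c}(x,y) = |x|^{−a}·|y|^{−b}·|x−y|^{−c}`. -/
def Gf (a b c : ℝ) (x y : ℝ) : ℝ := |x| ^ (-a) * |y| ^ (-b) * |x - y| ^ (-c)

/-- `Ĝ_{a,b,c}(x,y) = G_{a,b,c}(x,y) + G_{a,b,c}(y,x)`. -/
def Ghat (a b c : ℝ) (x y : ℝ) : ℝ := Gf a b c x y + Gf a b c y x

/-- Soft-edge one-point correlation function of the `n`-point GUE ensemble. -/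
def rhoN (n : ℕ) (x : ℝ) : ℝ :=
  (deriv (psiN n) x) ^ 2 - (x ^ 2 / (4 * (n : ℝ) ^ ((2:ℝ)/3)) + x) * (psiN n x) ^ 2

end

/-!
On the contour `ℝ + i` the Airy integrand decays like a Gaussian. Shifting the contour there
justifies differentiating under the integral, whence `Ai'' = x Ai`, and shows that `Ai` and `Ai'`
are `O(exp (-x))` on the right. On the left, `f s = Ai (-s)` solves `f'' = -s f`; the energy
`f' ^ 2 / √s + √s f ^ 2`, corrected by `f f' / (2 s ^ (3/2))`, has a logarithmic derivative
integrable at infinity and hence stays bounded, so `Ai = O(|y| ^ (-1/4))` and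
`Ai' = O(|y| ^ (1/4))`. The two pointwise bounds follow by multiplying growth rates at infinity;
elsewhere they hold by compactness, as the kernel and its derivative are continuous off the
diagonal.

The kernel itself is only `O(|u| ^ (-3/4))`, which is not integrable. Its slow part
`Ai x * Ai' u / (x - u)` is, up to an integrable error, the derivative of the bounded function
`Ai x * Ai u * φ (x - u)` with `φ v = v / (1 + v ^ 2)`.
-/

open Asymptotics

section Growth

lemma exists_pos_forall_norm_le_of_isBigO_cocompact {X E F : Type*} [TopologicalSpace X]
    [SeminormedAddCommGroup E] [NormedAddCommGroup F] {S : Set X} {f : X → E} {g : X → F}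
    (hS : IsClosed S) (hf : ContinuousOn f S) (hg : ContinuousOn g S) (hg0 : ∀ y ∈ S, g y ≠ 0)
    (hO : f =O[cocompact X] g) : ∃ C > 0, ∀ y ∈ S, ‖f y‖ ≤ C * ‖g y‖ := by
  obtain ⟨c, hc⟩ := hO.bound
  obtain ⟨K, hK, hKc⟩ := mem_cocompact.1 hc
  have ratio_cont : ContinuousOn (fun y => ‖f y‖ / ‖g y‖) (K ∩ S) :=
    (hf.norm.div hg.norm fun y hy => norm_ne_zero_iff.2 (hg0 y hy)).mono inter_subset_right
  obtain ⟨M, hM⟩ := (hK.inter_right hS).bddAbove_image ratio_cont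
  refine ⟨max 1 (max c M), by positivity, fun y hy => ?_⟩
  have g_pos : 0 < ‖g y‖ := norm_pos_iff.2 (hg0 y hy)
  rw [← div_le_iff₀ g_pos]
  by_cases hyK : y ∈ K
  · exact (hM (mem_image_of_mem _ ⟨hyK, hy⟩)).trans (by simp)
  · exact ((div_le_iff₀ g_pos).2 (hKc hyK)).trans (by simp)

lemma eventually_one_le_norm_cocompact {E : Type*} [SeminormedAddCommGroup E] [ProperSpace E] :
    ∀ᶠ y : E in cocompact E, 1 ≤ ‖y‖ :=
  tendsto_norm_cocompact_atTop.eventually_ge_atTop 1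

lemma isBigO_norm_rpow_of_le {E : Type*} [SeminormedAddCommGroup E] [ProperSpace E] {p q : ℝ}
    (hpq : p ≤ q) : (fun y : E => ‖y‖ ^ p) =O[cocompact E] fun y => ‖y‖ ^ q := by
  refine .of_norm_eventuallyLE ?_
  filter_upwards [eventually_one_le_norm_cocompact] with y hy
  rw [Real.norm_of_nonneg (by positivity)]
  exact Real.rpow_le_rpow_of_exponent_le hy hpq

lemma isBigO_mul_norm_rpow {E R : Type*} [SeminormedAddCommGroup E] [ProperSpace E]
    [SeminormedRing R] {f g : E → R} {p q r : ℝ}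
    (hf : f =O[cocompact E] fun y => ‖y‖ ^ p) (hg : g =O[cocompact E] fun y => ‖y‖ ^ q)
    (hr : p + q ≤ r) : (fun y => f y * g y) =O[cocompact E] fun y => ‖y‖ ^ r := by
  refine ((hf.mul hg).congr' .rfl ?_).trans (isBigO_norm_rpow_of_le hr)
  filter_upwards [eventually_one_le_norm_cocompact] with y hy
  exact (Real.rpow_add (by positivity) p q).symm

lemma integrable_of_isBigO_norm_rpow {E F : Type*} [NormedAddCommGroup E] [NormedSpace ℝ E]
    [FiniteDimensional ℝ E] [MeasurableSpace E] [BorelSpace E] {μ : Measure E}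
    [μ.IsAddHaarMeasure] [NormedAddCommGroup F] {f : E → F} {r : ℝ} (hf : LocallyIntegrable f μ)
    (hr : Module.finrank ℝ E < r) (hO : f =O[cocompact E] fun y => ‖y‖ ^ (-r)) :
    Integrable f μ := by
  have : ProperSpace E := FiniteDimensional.proper ℝ E
  have r_nonneg : 0 ≤ r := (Nat.cast_nonneg _).trans hr.le
  have weight : (fun y : E => ‖y‖ ^ (-r)) =O[cocompact E] fun y => (1 + ‖y‖) ^ (-r) := by
    refine .of_bound (2 ^ r) ?_
    filter_upwards [eventually_one_le_norm_cocompact] with y hy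
    rw [Real.norm_of_nonneg (by positivity), Real.norm_of_nonneg (by positivity),
      Real.rpow_neg (by positivity), Real.rpow_neg (by positivity), ← div_eq_mul_inv,
      ← Real.inv_rpow (by positivity), ← Real.div_rpow (by positivity) (by positivity)]
    refine Real.rpow_le_rpow (by positivity) ?_ r_nonneg
    rw [inv_le_comm₀ (by positivity) (by positivity), inv_div]
    linarith
  exact hf.integrable_of_isBigO_cocompact (hO.trans weight)
    ((integrable_one_add_norm hr).integrableAtFilter _)

lemma norm_intervalIntegral_le_of_integrable_sub {E : Type*} [NormedAddCommGroup E]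
    [NormedSpace ℝ E] [CompleteSpace E] {f g G : ℝ → E} {B : ℝ}
    (hG : ∀ u, HasDerivAt G (g u) u) (hg : Continuous g) (hB : ∀ u, ‖G u‖ ≤ B)
    (hfg : Integrable (fun u => f u - g u)) (a b : ℝ) :
    ‖∫ u in a..b, f u‖ ≤ 2 * B + ∫ u, ‖f u - g u‖ := by
  have split : ∫ u in a..b, f u = G b - G a + ∫ u in a..b, (f u - g u) := by
    have primitive := intervalIntegral.integral_eq_sub_of_hasDerivAt (fun u _ => hG u)
      (hg.intervalIntegrable a b)
    rw [← primitive, ← intervalIntegral.integral_add (hg.intervalIntegrable a b)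
      hfg.intervalIntegrable]
    simp only [add_sub_cancel]
  have remainder : ‖∫ u in a..b, (f u - g u)‖ ≤ ∫ u, ‖f u - g u‖ :=
    intervalIntegral.norm_integral_le_integral_norm_uIoc.trans <|
      setIntegral_le_integral hfg.norm (Eventually.of_forall fun _ => norm_nonneg _)
  calc ‖∫ u in a..b, f u‖ ≤ ‖G b‖ + ‖G a‖ + ‖∫ u in a..b, (f u - g u)‖ := by
        rw [split]
        exact (norm_add_le _ _).trans (add_le_add_left (norm_sub_le _ _) _)
    _ ≤ 2 * B + ∫ u, ‖f u - g u‖ := by linarith [hB a, hB b]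

end Growth

section Energy

lemma antitoneOn_mul_exp_of_deriv_add_mul_nonpos {F F' K k : ℝ → ℝ} {a : ℝ}
    (hF : ∀ s, a ≤ s → HasDerivAt F (F' s) s) (hK : ∀ s, a ≤ s → HasDerivAt K (k s) s)
    (hle : ∀ s, a ≤ s → F' s + k s * F s ≤ 0) :
    AntitoneOn (fun s => F s * Real.exp (K s)) (Ici a) := by
  have hasDerivAt_mul (s : ℝ) (hs : a ≤ s) : HasDerivAt (fun s => F s * Real.exp (K s))
      ((F' s + k s * F s) * Real.exp (K s)) s :=
    ((hF s hs).mul (hK s hs).exp).congr_deriv (by ring)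
  exact antitoneOn_of_hasDerivWithinAt_nonpos (convex_Ici a)
    (fun s hs => (hasDerivAt_mul s hs).continuousAt.continuousWithinAt)
    (fun s hs => (hasDerivAt_mul s (interior_subset hs)).hasDerivWithinAt)
    fun s hs => mul_nonpos_of_nonpos_of_nonneg (hle s (interior_subset hs)) (Real.exp_nonneg _)

/-- The energy of the data `u = f s`, `v = f' s` of a solution of the reflected Airy equation
`f'' = -s f`, normalised so that it stays of order one along solutions. -/
noncomputable def airyEnergy (u v s : ℝ) : ℝ := v ^ 2 / √s + √s * u ^ 2

/-- The energy together with the first-order correction that cancels the non-oscillating part of its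
derivative, so that what remains decays like `s ^ (-5/2)`. -/
noncomputable def correctedAiryEnergy (u v s : ℝ) : ℝ := airyEnergy u v s + u * v / (2 * √s ^ 3)

lemma two_mul_abs_mul_le_airyEnergy (u v : ℝ) {s : ℝ} (hs : 0 < s) :
    2 * |u * v| ≤ airyEnergy u v s := by
  have sqrt_ne_zero : √s ≠ 0 := (Real.sqrt_pos.2 hs).ne'
  have complete_square : airyEnergy u v s - 2 * |u * v| = (|v| - √s * |u|) ^ 2 / √s := by
    rw [airyEnergy, ← sq_abs u, ← sq_abs v, abs_mul]
    field_simp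
    ring
  have : 0 ≤ (|v| - √s * |u|) ^ 2 / √s := by positivity
  linarith

lemma airyEnergy_le_correctedAiryEnergy (u v : ℝ) {s : ℝ} (hs : 1 ≤ s) :
    3 / 4 * airyEnergy u v s ≤ correctedAiryEnergy u v s := by
  have one_le_sqrt_pow : 1 ≤ √s ^ 3 := one_le_pow₀ (Real.one_le_sqrt.2 hs)
  have correction_le : |u * v / (2 * √s ^ 3)| ≤ |u * v| / 2 := by
    rw [abs_div, abs_of_pos (by positivity : 0 < 2 * √s ^ 3)]
    gcongr
    linarith
  rw [correctedAiryEnergy]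
  linarith [neg_abs_le (u * v / (2 * √s ^ 3)),
    two_mul_abs_mul_le_airyEnergy u v (zero_lt_one.trans_le hs)]

lemma hasDerivAt_correctedAiryEnergy {f g : ℝ → ℝ} {s : ℝ} (hs : 0 < s)
    (hf : HasDerivAt f (g s) s) (hg : HasDerivAt g (-s * f s) s) :
    HasDerivAt (fun s => correctedAiryEnergy (f s) (g s) s)
      (-(3 / 4) * (f s * g s) / √s ^ 5) s := by
  have sqrt_pos : 0 < √s := Real.sqrt_pos.2 hs
  have hasDerivAt_sqrt : HasDerivAt Real.sqrt (1 / (2 * √s)) s := Real.hasDerivAt_sqrt hs.ne'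
  have kinetic := (hg.pow 2).div hasDerivAt_sqrt sqrt_pos.ne'
  have potential := hasDerivAt_sqrt.mul (hf.pow 2)
  have correction := (hf.mul hg).div ((hasDerivAt_sqrt.pow 3).const_mul 2)
    (mul_pos two_pos (pow_pos sqrt_pos 3)).ne'
  refine ((kinetic.add potential).add correction).congr_deriv ?_
  have sq_sqrt : -s * f s = -√s ^ 2 * f s := by rw [Real.sq_sqrt hs.le]
  simp only [Pi.mul_apply, Pi.pow_apply, sq_sqrt]
  field_simp
  ring

lemma hasDerivAt_inv_sqrt_pow_three {s : ℝ} (hs : 0 < s) :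
    HasDerivAt (fun s => (3 * √s ^ 3)⁻¹) (-(1 / (2 * √s ^ 5))) s := by
  have sqrt_pos : 0 < √s := Real.sqrt_pos.2 hs
  refine ((((Real.hasDerivAt_sqrt hs.ne').pow 3).const_mul 3).inv
    (mul_pos three_pos (pow_pos sqrt_pos 3)).ne').congr_deriv ?_
  simp only [Pi.pow_apply]
  field_simp
  ring

lemma exists_airyEnergy_le {f g : ℝ → ℝ} (hf : ∀ s, 1 ≤ s → HasDerivAt f (g s) s)
    (hg : ∀ s, 1 ≤ s → HasDerivAt g (-s * f s) s) :
    ∃ A, ∀ s, 1 ≤ s → airyEnergy (f s) (g s) s ≤ A := by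
  have deriv_add_nonpos (s : ℝ) (hs : 1 ≤ s) : -(3 / 4) * (f s * g s) / √s ^ 5 +
      -(1 / (2 * √s ^ 5)) * correctedAiryEnergy (f s) (g s) s ≤ 0 := by
    have numerator_nonpos :
        -(3 / 4) * (f s * g s) - correctedAiryEnergy (f s) (g s) s / 2 ≤ 0 := by
      linarith [neg_abs_le (f s * g s), airyEnergy_le_correctedAiryEnergy (f s) (g s) hs,
        two_mul_abs_mul_le_airyEnergy (f s) (g s) (zero_lt_one.trans_le hs)]
    calc _ = (-(3 / 4) * (f s * g s) - correctedAiryEnergy (f s) (g s) s / 2) / √s ^ 5 := by ring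
      _ ≤ 0 := div_nonpos_of_nonpos_of_nonneg numerator_nonpos (by positivity)
  have antitone := antitoneOn_mul_exp_of_deriv_add_mul_nonpos
    (fun s hs => hasDerivAt_correctedAiryEnergy (zero_lt_one.trans_le hs) (hf s hs) (hg s hs))
    (fun s hs => hasDerivAt_inv_sqrt_pow_three (zero_lt_one.trans_le hs)) deriv_add_nonpos
  refine ⟨4 / 3 * (correctedAiryEnergy (f 1) (g 1) 1 * Real.exp (3 * √1 ^ 3)⁻¹), fun s hs => ?_⟩
  have decay := antitone self_mem_Ici hs hs
  have le_corrected := airyEnergy_le_correctedAiryEnergy (f s) (g s) hs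
  have energy_nonneg : 0 ≤ airyEnergy (f s) (g s) s := by
    unfold airyEnergy
    positivity
  have corrected_le := le_mul_of_one_le_right
    (by linarith : 0 ≤ correctedAiryEnergy (f s) (g s) s)
    (Real.one_le_exp (by positivity : 0 ≤ (3 * √s ^ 3)⁻¹))
  linarith

lemma isBigO_rpow_of_reflected_airy {f g : ℝ → ℝ} (hf : ∀ s, 1 ≤ s → HasDerivAt f (g s) s)
    (hg : ∀ s, 1 ≤ s → HasDerivAt g (-s * f s) s) :
    f =O[atTop] fun s => s ^ (-(1 : ℝ) / 4) := by
  obtain ⟨A, hA⟩ := exists_airyEnergy_le hf hg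
  refine IsBigO.of_pow two_ne_zero (.of_bound A ?_)
  filter_upwards [eventually_ge_atTop 1] with s hs
  have s_pos : 0 < s := zero_lt_one.trans_le hs
  have weight : (s ^ (-(1 : ℝ) / 4)) ^ 2 = (√s)⁻¹ := by
    rw [← Real.rpow_mul_natCast s_pos.le, Real.sqrt_eq_rpow, ← Real.rpow_neg s_pos.le]
    norm_num
  have potential_le : √s * f s ^ 2 ≤ A :=
    (le_add_of_nonneg_left (by positivity)).trans (hA s hs)
  simp only [Pi.pow_apply, weight]
  rwa [Real.norm_of_nonneg (by positivity), Real.norm_of_nonneg (by positivity),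
    ← div_eq_mul_inv, le_div_iff₀' (Real.sqrt_pos.2 s_pos)]

lemma isBigO_rpow_deriv_of_reflected_airy {f g : ℝ → ℝ}
    (hf : ∀ s, 1 ≤ s → HasDerivAt f (g s) s) (hg : ∀ s, 1 ≤ s → HasDerivAt g (-s * f s) s) :
    g =O[atTop] fun s => s ^ ((1 : ℝ) / 4) := by
  obtain ⟨A, hA⟩ := exists_airyEnergy_le hf hg
  refine IsBigO.of_pow two_ne_zero (.of_bound A ?_)
  filter_upwards [eventually_ge_atTop 1] with s hs
  have s_pos : 0 < s := zero_lt_one.trans_le hs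
  have weight : (s ^ ((1 : ℝ) / 4)) ^ 2 = √s := by
    rw [← Real.rpow_mul_natCast s_pos.le, Real.sqrt_eq_rpow]
    norm_num
  have kinetic_le : g s ^ 2 / √s ≤ A :=
    (le_add_of_nonneg_right (by positivity)).trans (hA s hs)
  simp only [Pi.pow_apply, weight]
  rwa [Real.norm_of_nonneg (by positivity), Real.norm_of_nonneg (by positivity),
    ← div_le_iff₀ (Real.sqrt_pos.2 s_pos)]

end Energy

section ContourRepresentation

open Complex Topology

/-- The integrand `exp (i (z ^ 3 / 3 + x z))` of the Airy integral, as an entire function of the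
contour variable `z`. -/
noncomputable def airyExp (x : ℝ) (z : ℂ) : ℂ := exp (I * (z ^ 3 / 3 + x * z))

/-- The `n`-th derivative in `x` of the Airy integrand `airyExp x`, restricted to the contour
`ℝ + i`, where the integrand has Gaussian decay. -/
noncomputable def airyIntegrand (n : ℕ) (x t : ℝ) : ℂ := (I * (t + I)) ^ n * airyExp x (t + I)

/-- The integral of the Airy integrand, differentiated `n` times in `x`, over the contour `ℝ + i`;
its real part is `2π` times the `n`-th derivative of the Airy function. -/
noncomputable def airyContourIntegral (n : ℕ) (x : ℝ) : ℂ := ∫ t : ℝ, airyIntegrand n x t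

lemma differentiable_airyExp (x : ℝ) : Differentiable ℂ (airyExp x) := by
  unfold airyExp
  fun_prop

lemma norm_airyExp (x t s : ℝ) :
    ‖airyExp x (t + s * I)‖ = Real.exp (s ^ 3 / 3 - x * s - t ^ 2 * s) := by
  rw [airyExp, norm_exp]
  congr 1
  simp only [pow_succ, pow_zero, one_mul, mul_re, mul_im, add_re, add_im, div_ofNat_re,
    div_ofNat_im, I_re, I_im, ofReal_re, ofReal_im, mul_zero, zero_mul, mul_one, add_zero, zero_add,
    sub_zero, zero_sub, sub_self]
  ring

lemma re_airyExp_ofReal (x t : ℝ) : (airyExp x t).re = Real.cos (t ^ 3 / 3 + x * t) := by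
  rw [airyExp, ← exp_ofReal_mul_I_re]
  push_cast
  rw [mul_comm]

lemma continuous_airyIntegrand (n : ℕ) (x : ℝ) : Continuous (airyIntegrand n x) := by
  unfold airyIntegrand airyExp
  fun_prop

lemma norm_airyIntegrand_le (n : ℕ) (x t : ℝ) :
    ‖airyIntegrand n x t‖ ≤
      n.factorial * Real.exp 2 * Real.exp (-x) * Real.exp (-(1 / 2) * t ^ 2) := by
  have norm_base : ‖I * ((t : ℂ) + I)‖ ≤ |t| + 1 := by
    simpa using norm_add_le (t : ℂ) I
  have pow_le : (|t| + 1) ^ n ≤ n.factorial * Real.exp (|t| + 1) := by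
    rw [← div_le_iff₀' (by positivity)]
    exact Real.pow_div_factorial_le_exp _ (by positivity) n
  have norm_exp_eq : ‖airyExp x (t + I)‖ = Real.exp (1 / 3 - x - t ^ 2) := by
    simpa using norm_airyExp x t 1
  calc ‖airyIntegrand n x t‖
      = ‖I * ((t : ℂ) + I)‖ ^ n * Real.exp (1 / 3 - x - t ^ 2) := by
        rw [airyIntegrand, norm_mul, norm_pow, norm_exp_eq]
    _ ≤ n.factorial * Real.exp (|t| + 1) * Real.exp (1 / 3 - x - t ^ 2) := by
        gcongr
        exact (pow_le_pow_left₀ (norm_nonneg _) norm_base n).trans pow_le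
    _ = n.factorial * Real.exp (|t| + 1 + (1 / 3 - x - t ^ 2)) := by
        rw [Real.exp_add (|t| + 1)]
        ring
    _ ≤ n.factorial * Real.exp (2 + -x + -(1 / 2) * t ^ 2) := by
        gcongr n.factorial * Real.exp ?_
        nlinarith [sq_nonneg (|t| - 1), sq_abs t]
    _ = _ := by
        rw [Real.exp_add, Real.exp_add]
        ring

lemma integrable_airyIntegrand (n : ℕ) (x : ℝ) : Integrable (airyIntegrand n x) :=
  ((integrable_exp_neg_mul_sq (by norm_num)).const_mul _).mono'
    (continuous_airyIntegrand n x).aestronglyMeasurable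
    (Eventually.of_forall (norm_airyIntegrand_le n x))

lemma airyContourIntegral_isBigO_exp_neg (n : ℕ) (l : Filter ℝ) :
    airyContourIntegral n =O[l] fun x => Real.exp (-x) := by
  refine .of_bound (n.factorial * Real.exp 2 * ∫ t : ℝ, Real.exp (-(1 / 2) * t ^ 2))
    (Eventually.of_forall fun x => ?_)
  calc ‖airyContourIntegral n x‖
      ≤ ∫ t : ℝ, n.factorial * Real.exp 2 * Real.exp (-x) * Real.exp (-(1 / 2) * t ^ 2) :=
        norm_integral_le_of_norm_le ((integrable_exp_neg_mul_sq (by norm_num)).const_mul _)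
          (Eventually.of_forall (norm_airyIntegrand_le n x))
    _ = _ := by
        rw [integral_const_mul, Real.norm_of_nonneg (Real.exp_nonneg _)]
        ring

lemma hasDerivAt_airyIntegrand_param (n : ℕ) (x t : ℝ) :
    HasDerivAt (fun y => airyIntegrand n y t) (airyIntegrand (n + 1) x t) x := by
  have phase : HasDerivAt (fun y : ℝ => I * (((t : ℂ) + I) ^ 3 / 3 + y * (t + I)))
      (I * (t + I)) x := by
    simpa using (((hasDerivAt_id x).ofReal_comp.mul_const ((t : ℂ) + I)).const_add
      (((t : ℂ) + I) ^ 3 / 3)).const_mul I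
  refine (phase.cexp.const_mul ((I * ((t : ℂ) + I)) ^ n)).congr_deriv ?_
  rw [airyIntegrand, airyExp]
  ring

lemma hasDerivAt_airyContourIntegral (n : ℕ) (x : ℝ) :
    HasDerivAt (airyContourIntegral n) (airyContourIntegral (n + 1) x) x := by
  refine (hasDerivAt_integral_of_dominated_loc_of_deriv_le (Ioi_mem_nhds (sub_one_lt x))
    (Eventually.of_forall fun y => (continuous_airyIntegrand n y).aestronglyMeasurable)
    (integrable_airyIntegrand n x) (continuous_airyIntegrand (n + 1) x).aestronglyMeasurable
    (bound := fun t => (n + 1).factorial * Real.exp 2 * Real.exp (-(x - 1)) *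
      Real.exp (-(1 / 2) * t ^ 2))
    (Eventually.of_forall fun t y hy => (norm_airyIntegrand_le (n + 1) y t).trans ?_)
    ((integrable_exp_neg_mul_sq (by norm_num)).const_mul _)
    (Eventually.of_forall fun t y _ => hasDerivAt_airyIntegrand_param n y t)).2
  gcongr
  exact (mem_Ioi.1 hy).le

lemma airyContourIntegral_two (x : ℝ) :
    airyContourIntegral 2 x = x * airyContourIntegral 0 x := by
  have hasDerivAt_exp (t : ℝ) : HasDerivAt (fun t => I * airyIntegrand 0 x t)
      (airyIntegrand 2 x t - x * airyIntegrand 0 x t) t := by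
    have shift : HasDerivAt (fun t : ℝ => (t : ℂ) + I) 1 t := by
      simpa using (hasDerivAt_id t).ofReal_comp.add_const I
    have phase := (((shift.pow 3).div_const 3).add (shift.const_mul (x : ℂ))).const_mul I
    simp only [airyIntegrand, pow_zero, one_mul]
    refine (phase.cexp.const_mul I).congr_deriv ?_
    simp only [airyExp, Pi.add_apply, Pi.pow_apply, mul_pow]
    push_cast
    linear_combination x * exp (I * (((t : ℂ) + I) ^ 3 / 3 + x * (t + I))) * I_sq
  have int_two := integrable_airyIntegrand 2 x
  have int_zero := integrable_airyIntegrand 0 x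
  have integral_eq_zero := integral_eq_zero_of_hasDerivAt_of_integrable hasDerivAt_exp
    (int_two.sub (int_zero.const_mul _)) (int_zero.const_mul I)
  rwa [integral_sub int_two (int_zero.const_mul _), integral_const_mul, sub_eq_zero]
    at integral_eq_zero

lemma tendsto_airyExp_cocompact (x : ℝ) {s : ℝ} (hs : 0 < s) :
    Tendsto (fun t : ℝ => airyExp x (t + s * I)) (cocompact ℝ) (𝓝 0) := by
  have sq_tendsto : Tendsto (fun t : ℝ => t ^ 2) (cocompact ℝ) atTop := by
    simpa only [Function.comp_def, Real.norm_eq_abs, sq_abs] using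
      (tendsto_pow_atTop two_ne_zero).comp (tendsto_norm_cocompact_atTop (E := ℝ))
  rw [tendsto_zero_iff_norm_tendsto_zero]
  simp_rw [norm_airyExp]
  exact Real.tendsto_exp_atBot.comp <| tendsto_atBot_add_const_left _ _ <|
    tendsto_neg_atTop_atBot.comp <| sq_tendsto.atTop_mul_const hs

lemma tendsto_vertical_integral_airyExp {ι : Type*} {l : Filter ι} [l.IsCountablyGenerated]
    (x : ℝ) {c : ι → ℝ} (hc : Tendsto c l (cocompact ℝ)) :
    Tendsto (fun i => ∫ s in (0 : ℝ)..1, airyExp x (c i + s * I)) l (𝓝 0) := by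
  have norm_le (t : ℝ) {s : ℝ} (hs : s ∈ Ioc (0 : ℝ) 1) :
      ‖airyExp x (t + s * I)‖ ≤ Real.exp (1 / 3 + |x|) := by
    rw [norm_airyExp, Real.exp_le_exp]
    have pow_le : s ^ 3 ≤ 1 := pow_le_one₀ hs.1.le hs.2
    have mul_le : |x| * s ≤ |x| := mul_le_of_le_one_right (abs_nonneg x) hs.2
    nlinarith [mul_nonneg (sq_nonneg t) hs.1.le, neg_abs_le x, hs.1]
  rw [show (0 : ℂ) = ∫ _ in (0 : ℝ)..1, (0 : ℂ) by simp]
  refine intervalIntegral.tendsto_integral_filter_of_dominated_convergence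
    (fun _ => Real.exp (1 / 3 + |x|)) (Eventually.of_forall fun i => ?_)
    (Eventually.of_forall fun i => Eventually.of_forall fun s hs => ?_) ?_
    (Eventually.of_forall fun s hs => ?_)
  · exact ((differentiable_airyExp x).continuous.comp (by fun_prop)).aestronglyMeasurable
  · rw [uIoc_of_le zero_le_one] at hs
    exact norm_le (c i) hs
  · exact intervalIntegrable_const
  · rw [uIoc_of_le zero_le_one] at hs
    exact (tendsto_airyExp_cocompact x hs.1).comp hc

lemma integral_airyExp_eq_shifted (x b : ℝ) :
    ∫ t in -b..b, airyExp x t = (∫ t in -b..b, airyIntegrand 0 x t) +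
      (I * ∫ s in (0 : ℝ)..1, airyExp x ((-b : ℝ) + s * I)) -
      I * ∫ s in (0 : ℝ)..1, airyExp x (b + s * I) := by
  have rectangle := integral_boundary_rect_eq_zero_of_differentiableOn (airyExp x) ((-b : ℝ) : ℂ)
    (b + I) (differentiable_airyExp x).differentiableOn
  simp only [ofReal_re, ofReal_im, add_re, add_im, I_re, I_im, add_zero, zero_add, ofReal_zero,
    ofReal_one, zero_mul, one_mul, smul_eq_mul] at rectangle
  simp only [airyIntegrand, pow_zero, one_mul]
  linear_combination rectangle

lemma integral_cos_eq_re_integral_airyExp (x b : ℝ) :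
    ∫ t in (0 : ℝ)..b, Real.cos (t ^ 3 / 3 + x * t) = (∫ t in -b..b, airyExp x t).re / 2 := by
  have cont : Continuous fun t : ℝ => Real.cos (t ^ 3 / 3 + x * t) := by fun_prop
  have re_integral : (∫ t in -b..b, airyExp x t).re =
      ∫ t in -b..b, Real.cos (t ^ 3 / 3 + x * t) := by
    have contExp : Continuous fun t : ℝ => airyExp x t :=
      (differentiable_airyExp x).continuous.comp continuous_ofReal
    simp_rw [← re_airyExp_ofReal]
    exact (intervalIntegral.intervalIntegral_re (contExp.intervalIntegrable _ _)).symm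
  have even : ∫ t in -b..0, Real.cos (t ^ 3 / 3 + x * t) =
      ∫ t in (0 : ℝ)..b, Real.cos (t ^ 3 / 3 + x * t) := by
    rw [← neg_zero, ← intervalIntegral.integral_comp_neg, neg_zero]
    congr! 2 with t
    rw [← Real.cos_neg]
    ring_nf
  rw [re_integral, ← intervalIntegral.integral_add_adjacent_intervals
    (cont.intervalIntegrable (-b) 0) (cont.intervalIntegrable 0 b), even]
  ring

lemma Ai_eq_re_airyContourIntegral (x : ℝ) :
    Ai x = (2 * Real.pi)⁻¹ * (airyContourIntegral 0 x).re := by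
  have horizontal : Tendsto (fun b => ∫ t in -b..b, airyIntegrand 0 x t) atTop
      (𝓝 (airyContourIntegral 0 x)) :=
    intervalIntegral_tendsto_integral (integrable_airyIntegrand 0 x) tendsto_neg_atTop_atBot
      tendsto_id
  have left := (tendsto_vertical_integral_airyExp x
    (tendsto_neg_atTop_atBot.mono_right atBot_le_cocompact)).const_mul I
  have right := (tendsto_vertical_integral_airyExp x
    (tendsto_id.mono_right atTop_le_cocompact)).const_mul I
  have limit : Tendsto (fun b => ∫ t in (0 : ℝ)..b, Real.cos (t ^ 3 / 3 + x * t)) atTop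
      (𝓝 ((airyContourIntegral 0 x).re / 2)) := by
    simp_rw [integral_cos_eq_re_integral_airyExp, integral_airyExp_eq_shifted]
    simpa using ((continuous_re.tendsto _).comp ((horizontal.add left).sub right)).div_const 2
  rw [Ai, limit.limUnder_eq]
  ring

end ContourRepresentation

section AiryEquation

open Complex

lemma hasDerivAt_re_airyContourIntegral (n : ℕ) (x : ℝ) :
    HasDerivAt (fun y => (2 * Real.pi)⁻¹ * (airyContourIntegral n y).re)
      ((2 * Real.pi)⁻¹ * (airyContourIntegral (n + 1) x).re) x :=
  (reCLM.hasFDerivAt.comp_hasDerivAt x (hasDerivAt_airyContourIntegral n x)).const_mul _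

lemma deriv_Ai_eq_re_airyContourIntegral (x : ℝ) :
    deriv Ai x = (2 * Real.pi)⁻¹ * (airyContourIntegral 1 x).re := by
  rw [funext Ai_eq_re_airyContourIntegral]
  exact (hasDerivAt_re_airyContourIntegral 0 x).deriv

lemma hasDerivAt_Ai (x : ℝ) : HasDerivAt Ai (deriv Ai x) x := by
  rw [deriv_Ai_eq_re_airyContourIntegral, funext Ai_eq_re_airyContourIntegral]
  exact hasDerivAt_re_airyContourIntegral 0 x

lemma hasDerivAt_deriv_Ai (x : ℝ) : HasDerivAt (deriv Ai) (x * Ai x) x := by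
  rw [funext deriv_Ai_eq_re_airyContourIntegral]
  refine (hasDerivAt_re_airyContourIntegral 1 x).congr_deriv ?_
  rw [Ai_eq_re_airyContourIntegral, airyContourIntegral_two, re_ofReal_mul]
  ring

lemma continuous_Ai : Continuous Ai :=
  continuous_iff_continuousAt.2 fun x => (hasDerivAt_Ai x).continuousAt

lemma continuous_deriv_Ai : Continuous (deriv Ai) :=
  continuous_iff_continuousAt.2 fun x => (hasDerivAt_deriv_Ai x).continuousAt

end AiryEquation

section AiryGrowth

lemma isBigO_rpow_atTop_of_isBigO_exp_neg {f : ℝ → ℝ} (hf : f =O[atTop] fun x => Real.exp (-x))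
    (p : ℝ) : f =O[atTop] fun x => x ^ p :=
  hf.trans (by simpa using (isLittleO_exp_neg_mul_rpow_atTop one_pos p).isBigO)

lemma isBigO_abs_rpow_cocompact {f : ℝ → ℝ} {p : ℝ} (hpos : f =O[atTop] fun s => s ^ p)
    (hneg : (fun s => f (-s)) =O[atTop] fun s => s ^ p) :
    f =O[cocompact ℝ] fun y => |y| ^ p := by
  rw [cocompact_eq_atBot_atTop]
  refine .sup ((hneg.comp_tendsto tendsto_neg_atBot_atTop).congr' (by simp [Function.comp_def]) ?_)
    (hpos.congr' .rfl ?_)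
  · filter_upwards [eventually_le_atBot 0] with y hy
    simp [abs_of_nonpos hy]
  · filter_upwards [eventually_ge_atTop 0] with y hy
    rw [abs_of_nonneg hy]

lemma re_airyContourIntegral_isBigO_exp_neg (n : ℕ) :
    (fun x => (2 * Real.pi)⁻¹ * (airyContourIntegral n x).re) =O[atTop]
      fun x => Real.exp (-x) :=
  (IsBigO.of_norm_le fun _ => Complex.abs_re_le_norm _).trans
    (airyContourIntegral_isBigO_exp_neg n atTop).norm_left |>.const_mul_left _

lemma hasDerivAt_Ai_neg (s : ℝ) : HasDerivAt (fun s => Ai (-s)) (-deriv Ai (-s)) s :=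
  ((hasDerivAt_Ai (-s)).comp s (hasDerivAt_neg s)).congr_deriv (by ring)

lemma hasDerivAt_neg_deriv_Ai_neg (s : ℝ) :
    HasDerivAt (fun s => -deriv Ai (-s)) (-s * Ai (-s)) s :=
  ((hasDerivAt_deriv_Ai (-s)).comp s (hasDerivAt_neg s)).neg.congr_deriv (by ring)

lemma isBigO_Ai : Ai =O[cocompact ℝ] fun y => |y| ^ (-(1 : ℝ) / 4) := by
  refine isBigO_abs_rpow_cocompact (isBigO_rpow_atTop_of_isBigO_exp_neg ?_ _)
    (isBigO_rpow_of_reflected_airy (fun s _ => hasDerivAt_Ai_neg s)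
      fun s _ => hasDerivAt_neg_deriv_Ai_neg s)
  rw [funext Ai_eq_re_airyContourIntegral]
  exact re_airyContourIntegral_isBigO_exp_neg 0

lemma isBigO_deriv_Ai : deriv Ai =O[cocompact ℝ] fun y => |y| ^ ((1 : ℝ) / 4) := by
  refine isBigO_abs_rpow_cocompact (isBigO_rpow_atTop_of_isBigO_exp_neg ?_ _) <|
    .of_neg_left (isBigO_rpow_deriv_of_reflected_airy (fun s _ => hasDerivAt_Ai_neg s)
      fun s _ => hasDerivAt_neg_deriv_Ai_neg s)
  rw [funext deriv_Ai_eq_re_airyContourIntegral]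
  exact re_airyContourIntegral_isBigO_exp_neg 1

end AiryGrowth

section Kernel

/-- The numerator of the Airy kernel. -/
noncomputable def airyKernelNum (x y : ℝ) : ℝ := Ai x * deriv Ai y - deriv Ai x * Ai y

lemma KAi_of_ne {x y : ℝ} (h : x ≠ y) : KAi x y = airyKernelNum x y * (x - y)⁻¹ := by
  rw [KAi, if_neg h, airyKernelNum, div_eq_mul_inv]

lemma KAi_comm (x y : ℝ) : KAi x y = KAi y x := by
  obtain rfl | h := eq_or_ne x y
  · rfl
  · rw [KAi_of_ne h, KAi_of_ne h.symm, ← neg_sub y x, inv_neg, airyKernelNum, airyKernelNum]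
    ring

lemma hasDerivAt_airyKernelNum (x y : ℝ) :
    HasDerivAt (airyKernelNum x) (Ai x * (y * Ai y) - deriv Ai x * deriv Ai y) y :=
  ((hasDerivAt_deriv_Ai y).const_mul _).sub ((hasDerivAt_Ai y).const_mul _)

lemma KAi_eq_neg_dslope (x y : ℝ) : KAi x y = -dslope (airyKernelNum x) x y := by
  obtain rfl | h := eq_or_ne x y
  · rw [dslope_same, (hasDerivAt_airyKernelNum x x).deriv, KAi, if_pos rfl]
    ring
  · rw [dslope_of_ne _ h.symm, slope_def_field, KAi_of_ne h, ← neg_sub y x, inv_neg]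
    simp only [airyKernelNum]
    ring

lemma continuous_KAi (x : ℝ) : Continuous (KAi x) := by
  rw [funext (KAi_eq_neg_dslope x), ← continuousOn_univ]
  refine ((continuousOn_dslope univ_mem).2
    ⟨fun y _ => ?_, (hasDerivAt_airyKernelNum x x).differentiableAt⟩).neg
  exact (hasDerivAt_airyKernelNum x y).continuousAt.continuousWithinAt

lemma hasDerivAt_KAi {x y : ℝ} (h : x ≠ y) :
    HasDerivAt (KAi x) ((Ai x * (y * Ai y) - deriv Ai x * deriv Ai y) * (x - y)⁻¹ +
      airyKernelNum x y * ((x - y)⁻¹ * (x - y)⁻¹)) y := by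
  have off_diagonal : KAi x =ᶠ[nhds y] fun z => airyKernelNum x z * (x - z)⁻¹ := by
    filter_upwards [isOpen_ne.mem_nhds h.symm] with z hz
    exact KAi_of_ne hz.symm
  refine (((hasDerivAt_airyKernelNum x y).mul
    (((hasDerivAt_id y).const_sub x).inv (sub_ne_zero.2 h))).congr_of_eventuallyEq
    off_diagonal).congr_deriv ?_
  have : x - y ≠ 0 := sub_ne_zero.2 h
  simp only [id, Pi.inv_apply]
  field_simp

lemma isBigO_inv_sub (x : ℝ) : (fun y => (x - y)⁻¹) =O[cocompact ℝ] fun y => |y| ^ (-1 : ℝ) := by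
  simp_rw [Real.rpow_neg_one, ← Real.norm_eq_abs]
  have : (fun y : ℝ => ‖y‖) =O[cocompact ℝ] fun y => x - y := by
    refine .of_bound 2 ?_
    filter_upwards [tendsto_norm_cocompact_atTop.eventually_ge_atTop (2 * ‖x‖)] with y hy
    rw [norm_norm]
    linarith [norm_sub_norm_le y x, norm_sub_rev x y]
  refine this.inv_rev ?_
  filter_upwards [eventually_one_le_norm_cocompact] with y hy h0
  linarith

lemma isBigO_inv_sub_mul_self (x : ℝ) :
    (fun y => (x - y)⁻¹ * (x - y)⁻¹) =O[cocompact ℝ] fun y => |y| ^ (-2 : ℝ) :=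
  isBigO_mul_norm_rpow (isBigO_inv_sub x) (isBigO_inv_sub x) (by norm_num)

lemma isBigO_airyKernelNum (x : ℝ) :
    airyKernelNum x =O[cocompact ℝ] fun y => |y| ^ ((1 : ℝ) / 4) :=
  (isBigO_deriv_Ai.const_mul_left _).sub
    ((isBigO_Ai.trans (isBigO_norm_rpow_of_le (by norm_num))).const_mul_left _)

lemma isBigO_KAi (x : ℝ) : KAi x =O[cocompact ℝ] fun y => |y| ^ (-(3 : ℝ) / 4) := by
  refine (isBigO_mul_norm_rpow (isBigO_airyKernelNum x) (isBigO_inv_sub x)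
    (by norm_num)).congr' ?_ .rfl
  filter_upwards [(finite_singleton x).isCompact.compl_mem_cocompact] with y hy
  exact (KAi_of_ne (Ne.symm hy)).symm

lemma isBigO_deriv_KAi (x : ℝ) :
    deriv (KAi x) =O[cocompact ℝ] fun y => |y| ^ (-(1 : ℝ) / 4) := by
  have isBigO_id : (fun y : ℝ => y) =O[cocompact ℝ] fun y => |y| ^ (1 : ℝ) :=
    .of_norm_le fun y => by simp
  have numerator : (fun y => Ai x * (y * Ai y) - deriv Ai x * deriv Ai y) =O[cocompact ℝ]
      fun y => |y| ^ ((3 : ℝ) / 4) :=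
    ((isBigO_mul_norm_rpow isBigO_id isBigO_Ai (by norm_num)).const_mul_left _).sub
      ((isBigO_deriv_Ai.trans (isBigO_norm_rpow_of_le (by norm_num))).const_mul_left _)
  refine ((isBigO_mul_norm_rpow numerator (isBigO_inv_sub x) (by norm_num)).add
    (isBigO_mul_norm_rpow (isBigO_airyKernelNum x) (isBigO_inv_sub_mul_self x)
      (by norm_num))).congr' ?_ .rfl
  filter_upwards [(finite_singleton x).isCompact.compl_mem_cocompact] with y hy
  exact (hasDerivAt_KAi (Ne.symm hy)).deriv.symm

lemma continuousOn_deriv_KAi (x : ℝ) : ContinuousOn (deriv (KAi x)) {x}ᶜ := by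
  have inv_cont : ContinuousOn (fun y => (x - y)⁻¹) {x}ᶜ :=
    (continuousOn_const.sub continuousOn_id).inv₀ fun y hy => sub_ne_zero.2 (Ne.symm hy)
  have num_cont : Continuous (airyKernelNum x) :=
    (continuous_deriv_Ai.const_mul _).sub (continuous_Ai.const_mul _)
  have deriv_num_cont : Continuous fun y => Ai x * (y * Ai y) - deriv Ai x * deriv Ai y :=
    ((continuous_id.mul continuous_Ai).const_mul _).sub (continuous_deriv_Ai.const_mul _)
  exact ((deriv_num_cont.continuousOn.mul inv_cont).add
    (num_cont.continuousOn.mul (inv_cont.mul inv_cont))).congr fun y hy =>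
    (hasDerivAt_KAi (Ne.symm hy)).deriv

end Kernel

section Primitive

/-- A smooth substitute for `v⁻¹`, agreeing with it up to `O(v⁻³)` at infinity; it regularises the
singularity at the diagonal when the Airy kernel is integrated by parts. -/
noncomputable def regularizedInv (v : ℝ) : ℝ := v / (1 + v ^ 2)

/-- The derivative of `regularizedInv`. -/
noncomputable def regularizedInvDeriv (v : ℝ) : ℝ := (1 - v ^ 2) / (1 + v ^ 2) ^ 2

lemma hasDerivAt_regularizedInv (v : ℝ) :
    HasDerivAt regularizedInv (regularizedInvDeriv v) v := by
  refine ((hasDerivAt_id v).div (((hasDerivAt_id v).pow 2).const_add 1)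
    (by positivity : 1 + v ^ 2 ≠ 0)).congr_deriv ?_
  simp only [regularizedInvDeriv, id, Pi.pow_apply]
  ring

lemma continuous_regularizedInvDeriv : Continuous regularizedInvDeriv := by
  unfold regularizedInvDeriv
  exact .div (by fun_prop) (by fun_prop) fun v => by positivity

lemma abs_regularizedInv_le (v : ℝ) : |regularizedInv v| ≤ 1 := by
  rw [regularizedInv, abs_div, abs_of_pos (by positivity : 0 < 1 + v ^ 2),
    div_le_one (by positivity)]
  nlinarith [sq_nonneg (|v| - 1), sq_abs v]

lemma abs_inv_sub_regularizedInv_le (v : ℝ) : |v⁻¹ - regularizedInv v| ≤ |v⁻¹ * v⁻¹| := by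
  obtain rfl | hv := eq_or_ne v 0
  · simp [regularizedInv]
  have difference : v⁻¹ - regularizedInv v = v⁻¹ * (1 + v ^ 2)⁻¹ := by
    rw [regularizedInv]
    field_simp
    ring
  have abs_le_one_add_sq : |v| ≤ 1 + v ^ 2 := by
    nlinarith [sq_nonneg (|v| - 1), sq_abs v]
  rw [difference, abs_mul, abs_mul, abs_inv (1 + v ^ 2), abs_inv v,
    abs_of_pos (by positivity : 0 < 1 + v ^ 2)]
  gcongr

lemma abs_regularizedInvDeriv_le {v : ℝ} (hv : v ≠ 0) :
    |regularizedInvDeriv v| ≤ |v⁻¹ * v⁻¹| := by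
  have numerator_le : |1 - v ^ 2| ≤ 1 + v ^ 2 := by
    rw [abs_le]
    constructor <;> nlinarith [sq_nonneg v]
  calc |regularizedInvDeriv v| = |1 - v ^ 2| / (1 + v ^ 2) ^ 2 := by
        rw [regularizedInvDeriv, abs_div, abs_of_pos (by positivity : 0 < (1 + v ^ 2) ^ 2)]
    _ ≤ (1 + v ^ 2) / (1 + v ^ 2) ^ 2 := by gcongr
    _ = (1 + v ^ 2)⁻¹ := by field_simp
    _ ≤ (v ^ 2)⁻¹ := by
        gcongr
        linarith
    _ = |v⁻¹ * v⁻¹| := by rw [abs_mul_self, ← mul_inv, sq]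

lemma hasDerivAt_Ai_mul_regularizedInv (x u : ℝ) :
    HasDerivAt (fun u => Ai u * regularizedInv (x - u))
      (deriv Ai u * regularizedInv (x - u) - Ai u * regularizedInvDeriv (x - u)) u :=
  ((hasDerivAt_Ai u).mul ((hasDerivAt_regularizedInv (x - u)).comp u
    ((hasDerivAt_id u).const_sub x))).congr_deriv (by simp only [Function.comp_apply]; ring)

/-- What remains of `KAi x` once the derivative of `Ai x * Ai u * regularizedInv (x - u)` is
removed: the only slowly decaying term of the kernel, `Ai x * Ai' u / (x - u)`, is cancelled. -/
noncomputable def airyKernelRemainder (x u : ℝ) : ℝ :=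
  KAi x u -
    Ai x * (deriv Ai u * regularizedInv (x - u) - Ai u * regularizedInvDeriv (x - u))

lemma airyKernelRemainder_of_ne {x u : ℝ} (h : x ≠ u) :
    airyKernelRemainder x u =
      Ai x * (deriv Ai u * ((x - u)⁻¹ - regularizedInv (x - u)) +
        Ai u * regularizedInvDeriv (x - u)) - deriv Ai x * (Ai u * (x - u)⁻¹) := by
  rw [airyKernelRemainder, KAi_of_ne h, airyKernelNum]
  ring

lemma continuous_deriv_Ai_mul_regularizedInv (x : ℝ) :
    Continuous fun u =>
      deriv Ai u * regularizedInv (x - u) - Ai u * regularizedInvDeriv (x - u) := by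
  have continuous_regularizedInv : Continuous regularizedInv :=
    continuous_iff_continuousAt.2 fun v => (hasDerivAt_regularizedInv v).continuousAt
  have := continuous_Ai
  have := continuous_deriv_Ai
  have := continuous_regularizedInvDeriv
  fun_prop

lemma isBigO_airyKernelRemainder (x : ℝ) :
    airyKernelRemainder x =O[cocompact ℝ] fun u => |u| ^ (-(5 / 4) : ℝ) := by
  have off_diagonal : ∀ᶠ u in cocompact ℝ, x ≠ u := by
    filter_upwards [(finite_singleton x).isCompact.compl_mem_cocompact] with u hu
    exact Ne.symm hu
  have inv_sub_isBigO : (fun u => (x - u)⁻¹ - regularizedInv (x - u)) =O[cocompact ℝ]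
      fun u => |u| ^ (-2 : ℝ) :=
    (IsBigO.of_norm_le fun u => abs_inv_sub_regularizedInv_le (x - u)).trans
      (isBigO_inv_sub_mul_self x).norm_left
  have deriv_isBigO : (fun u => regularizedInvDeriv (x - u)) =O[cocompact ℝ]
      fun u => |u| ^ (-2 : ℝ) :=
    (IsBigO.of_norm_eventuallyLE (off_diagonal.mono fun u hu =>
      abs_regularizedInvDeriv_le (sub_ne_zero.2 hu))).trans (isBigO_inv_sub_mul_self x).norm_left
  refine ((((isBigO_mul_norm_rpow isBigO_deriv_Ai inv_sub_isBigO (by norm_num)).add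
    (isBigO_mul_norm_rpow isBigO_Ai deriv_isBigO (by norm_num))).const_mul_left (Ai x)).sub
    ((isBigO_mul_norm_rpow isBigO_Ai (isBigO_inv_sub x) (by norm_num)).const_mul_left
      (deriv Ai x))).congr' ?_ .rfl
  exact off_diagonal.mono fun u hu => (airyKernelRemainder_of_ne hu).symm

lemma integrable_airyKernelRemainder (x : ℝ) : Integrable (airyKernelRemainder x) := by
  have remainder_cont : Continuous (airyKernelRemainder x) :=
    (continuous_KAi x).sub ((continuous_deriv_Ai_mul_regularizedInv x).const_mul _)
  refine integrable_of_isBigO_norm_rpow remainder_cont.locallyIntegrable ?_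
    (isBigO_airyKernelRemainder x)
  norm_num

lemma exists_abs_Ai_le : ∃ B, ∀ u, |Ai u| ≤ B := by
  have isBigO_one : Ai =O[cocompact ℝ] fun _ => (1 : ℝ) := by
    simpa using isBigO_Ai.trans (isBigO_norm_rpow_of_le (q := 0) (by norm_num))
  obtain ⟨B, -, hB⟩ := exists_pos_forall_norm_le_of_isBigO_cocompact isClosed_univ
    continuous_Ai.continuousOn continuousOn_const (fun _ _ => one_ne_zero) isBigO_one
  exact ⟨B, fun u => by simpa using hB u (mem_univ u)⟩

lemma exists_abs_integral_KAi_le (x : ℝ) : ∃ M, ∀ a b, |∫ u in a..b, KAi x u| ≤ M := by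
  obtain ⟨B, hB⟩ := exists_abs_Ai_le
  have primitive_le (u : ℝ) : |Ai x * (Ai u * regularizedInv (x - u))| ≤ |Ai x| * (B * 1) := by
    rw [abs_mul, abs_mul]
    have B_nonneg : 0 ≤ B := (abs_nonneg _).trans (hB u)
    gcongr
    exacts [hB u, abs_regularizedInv_le _]
  exact ⟨_, norm_intervalIntegral_le_of_integrable_sub
    (fun u => (hasDerivAt_Ai_mul_regularizedInv x u).const_mul (Ai x))
    ((continuous_deriv_Ai_mul_regularizedInv x).const_mul _) primitive_le
    (integrable_airyKernelRemainder x)⟩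

end Primitive

lemma exists_pos_forall_abs_le_rpow_of_isBigO {f : ℝ → ℝ} {x p : ℝ}
    (hf : ContinuousOn f {x}ᶜ) (hO : f =O[cocompact ℝ] fun y => |y| ^ p) :
    ∃ C, 0 < C ∧ ∀ y, |x| + 1 ≤ |y| → |f y| ≤ C * |y| ^ p := by
  have abs_pos_of_mem (y : ℝ) (hy : |x| + 1 ≤ |y|) : 0 < |y| := by linarith [abs_nonneg x]
  obtain ⟨C, hC, bound⟩ := exists_pos_forall_norm_le_of_isBigO_cocompact
    (S := {y | |x| + 1 ≤ |y|}) (isClosed_le continuous_const continuous_abs)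
    (hf.mono fun y hy => by rintro rfl; exact absurd hy (by simp))
    (continuous_abs.continuousOn.rpow_const fun y hy => .inl (abs_pos_of_mem y hy).ne')
    (fun y hy => (Real.rpow_pos_of_pos (abs_pos_of_mem y hy) p).ne') hO
  refine ⟨C, hC, fun y hy => (bound y hy).trans_eq ?_⟩
  rw [Real.norm_of_nonneg (by positivity)]

/-- bounds on the Airy kernel away from the diagonal, for fixed `x`. -/
theorem airy_kernel_bounds (x : ℝ) :
    (∃ M : ℝ, ∀ y : ℝ, |∫ u in x..y, KAi u x| ≤ M) ∧
    (∃ C : ℝ, 0 < C ∧ ∀ y : ℝ, |x| + 1 ≤ |y| → |KAi x y| ≤ C * |y| ^ (-(3:ℝ)/4)) ∧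
    (∃ C : ℝ, 0 < C ∧ ∀ y : ℝ, |x| + 1 ≤ |y| →
      |deriv (fun z => KAi x z) y| ≤ C * |y| ^ (-(1:ℝ)/4)) := by
  refine ⟨?_,
    exists_pos_forall_abs_le_rpow_of_isBigO (continuous_KAi x).continuousOn (isBigO_KAi x),
    exists_pos_forall_abs_le_rpow_of_isBigO (continuousOn_deriv_KAi x) (isBigO_deriv_KAi x)⟩
  obtain ⟨M, hM⟩ := exists_abs_integral_KAi_le x
  refine ⟨M, fun y => ?_⟩
  simpa only [KAi_comm x] using hM x y
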